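/- Let 𝕂 = ℝ or ℂ, let m ≥ 1, let p ≥ 2m, set ρ := 2mp/(mp + p − 2m), and let C ≥ 0 be a constant such that (∑_{|α|=m} |c_α(P)|^{ρ})^{1/ρ} ≤ C‖P‖ for every continuous m-homogeneous polynomial P : ℓ_p → 𝕂. Then (∑_{j₁,…,j_m=1}^∞ |T(e_{j₁},…,e_{j_m})|^{ρ})^{1/ρ} ≤ C‖T‖ for every continuous m-linear form T : ℓ_p × ⋯ × ℓ_p → 𝕂; that is, the multilinear Hardy–Littlewood constant is at most the polynomial Hardy–Littlewood constant. -/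

import Mathlib

open scoped Classical ENNReal

/-- Continuous `m`-linear forms on `ℓ_p`. -/
abbrev MultFormLp (𝕂 : Type*) [RCLike 𝕂] (P : ℝ≥0∞) [Fact (1 ≤ P)] (m : ℕ) :=
  ContinuousMultilinearMap 𝕂 (fun _ : Fin m => lp (fun _ : ℕ => 𝕂) P) 𝕂

/-- The degree `|α|` of a multi-index. -/
def mdeg (α : ℕ →₀ ℕ) : ℕ := α.sum fun _ n => n

/-- The coefficient `c_α` of the monomial `x^α` in the `m`-homogeneous polynomial
`x ↦ T (x, …, x)` on `ℓ_p`. -/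
noncomputable def coeffLp {𝕂 : Type*} [RCLike 𝕂] {P : ℝ≥0∞} [Fact (1 ≤ P)] {m : ℕ}
    (T : MultFormLp 𝕂 P m) (α : ℕ →₀ ℕ) : 𝕂 :=
  ∑ f : Fin m → α.support,
    if ∀ j : α.support, (Finset.univ.filter fun i => f i = j).card = α j then
      T (fun i => lp.single P (f i : ℕ) (1 : 𝕂))
    else 0

/-- The norm of a (polynomial) function: the supremum of `‖P x‖` over the closed unit ball. -/
noncomputable def polyNorm {𝕂 E : Type*} [RCLike 𝕂] [NormedAddCommGroup E] (P : E → 𝕂) : ℝ :=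
  sSup ((fun x => ‖P x‖) '' Metric.closedBall 0 1)

theorem aux_sum_le {𝕂 : Type*} [RCLike 𝕂] {P : ℝ≥0∞} [Fact (1 ≤ P)] (hP : 0 < P.toReal)
    (φ : ℕ → ℕ) (hφ : Function.Injective φ) (x : lp (fun _ : ℕ => 𝕂) P) (s : Finset ℕ) :
    ∑ i ∈ s, ‖x (φ i)‖ ^ P.toReal ≤ ‖x‖ ^ P.toReal := by
  have := lp.sum_rpow_le_norm_rpow hP x (s.map ⟨φ, hφ⟩)
  simpa using this

noncomputable def compLp {𝕂 : Type*} [RCLike 𝕂] {P : ℝ≥0∞} [Fact (1 ≤ P)] (hP : 0 < P.toReal)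
    (φ : ℕ → ℕ) (hφ : Function.Injective φ) :
    lp (fun _ : ℕ => 𝕂) P →L[𝕂] lp (fun _ : ℕ => 𝕂) P :=
  LinearMap.mkContinuous
    { toFun := fun x => ⟨fun j => x (φ j), memℓp_gen' (fun s => aux_sum_le hP φ hφ x s)⟩
      map_add' := fun x y => by ext j; simp; rfl
      map_smul' := fun c x => by ext j; simp } 1
    (fun x => by
      rw [one_mul]
      exact lp.norm_le_of_forall_sum_le hP (norm_nonneg _) (fun s => aux_sum_le hP φ hφ x s))

theorem compLp_apply {𝕂 : Type*} [RCLike 𝕂] {P : ℝ≥0∞} [Fact (1 ≤ P)] (hP : 0 < P.toReal)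
    (φ : ℕ → ℕ) (hφ : Function.Injective φ) (x : lp (fun _ : ℕ => 𝕂) P) (j : ℕ) :
    compLp hP φ hφ x j = x (φ j) := rfl

theorem compLp_norm {𝕂 : Type*} [RCLike 𝕂] {P : ℝ≥0∞} [Fact (1 ≤ P)] (hP : 0 < P.toReal)
    (φ : ℕ → ℕ) (hφ : Function.Injective φ) (x : lp (fun _ : ℕ => 𝕂) P) :
    ‖compLp hP φ hφ x‖ ≤ ‖x‖ :=
  lp.norm_le_of_forall_sum_le hP (norm_nonneg _) (fun s => aux_sum_le hP φ hφ x s)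

def enc {m : ℕ} (i : Fin m) (j : ℕ) : ℕ := Encodable.encode (i, j)

theorem enc_inj {m : ℕ} {i i' : Fin m} {j j' : ℕ} : enc i j = enc i' j' ↔ i = i' ∧ j = j' := by
  simp [enc]

theorem enc_inj' {m : ℕ} (i : Fin m) : Function.Injective (enc i) := fun a b h => (enc_inj.1 h).2

theorem compLp_single_eq {𝕂 : Type*} [RCLike 𝕂] {P : ℝ≥0∞} [Fact (1 ≤ P)] (hP : 0 < P.toReal)
    {m : ℕ} (i : Fin m) (j : ℕ) :
    compLp hP (enc i) (enc_inj' i) (lp.single P (enc i j) (1 : 𝕂)) = lp.single P j (1 : 𝕂) := by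
  ext k
  rw [compLp_apply]
  simp [lp.single_apply, Pi.single_apply, enc_inj]

theorem compLp_single_ne {𝕂 : Type*} [RCLike 𝕂] {P : ℝ≥0∞} [Fact (1 ≤ P)] (hP : 0 < P.toReal)
    {m : ℕ} (i i' : Fin m) (h : i ≠ i') (j : ℕ) :
    compLp hP (enc i) (enc_inj' i) (lp.single P (enc i' j) (1 : 𝕂)) = 0 := by
  ext k
  rw [compLp_apply]
  simp [lp.single_apply, Pi.single_apply, enc_inj, h]

noncomputable def idx {m : ℕ} (f : Fin m → ℕ) : ℕ →₀ ℕ := ∑ i, Finsupp.single (enc i (f i)) 1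

theorem idx_deg {m : ℕ} (f : Fin m → ℕ) : mdeg (idx f) = m := by
  change (idx f).degree = m
  simp [idx]

theorem idx_apply {m : ℕ} (f : Fin m → ℕ) (n : ℕ) :
    idx f n = (Finset.univ.filter fun i => enc i (f i) = n).card := by
  simp [idx, Finsupp.finsetSum_apply, Finsupp.single_apply]

theorem idx_enc {m : ℕ} (f : Fin m → ℕ) (i : Fin m) : idx f (enc i (f i)) = 1 := by
  rw [idx_apply, Finset.card_eq_one]
  refine ⟨i, ?_⟩
  ext k
  simp only [Finset.mem_filter, Finset.mem_univ, true_and, Finset.mem_singleton, enc_inj]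
  constructor
  · exact fun h => h.1
  · rintro rfl; simp

theorem idx_mem {m : ℕ} (f : Fin m → ℕ) (n : ℕ) :
    n ∈ (idx f).support ↔ ∃ i, enc i (f i) = n := by
  rw [Finsupp.mem_support_iff, idx_apply, Finset.card_ne_zero]
  simp [Finset.Nonempty]

theorem idx_inj {m : ℕ} : Function.Injective (idx (m := m)) := by
  intro f g h
  funext i
  have : enc i (f i) ∈ (idx g).support := by rw [← h, idx_mem]; exact ⟨i, rfl⟩
  obtain ⟨k, hk⟩ := (idx_mem _ _).1 this
  obtain ⟨rfl, h2⟩ := enc_inj.1 hk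
  exact h2.symm

noncomputable def liftForm {𝕂 : Type*} [RCLike 𝕂] {P : ℝ≥0∞} [Fact (1 ≤ P)] (hP : 0 < P.toReal)
    {m : ℕ} (T : MultFormLp 𝕂 P m) : MultFormLp 𝕂 P m :=
  T.compContinuousLinearMap (fun i => compLp hP (enc i) (enc_inj' i))

theorem liftForm_apply {𝕂 : Type*} [RCLike 𝕂] {P : ℝ≥0∞} [Fact (1 ≤ P)] (hP : 0 < P.toReal)
    {m : ℕ} (T : MultFormLp 𝕂 P m) (x : Fin m → lp (fun _ : ℕ => 𝕂) P) :
    liftForm hP T x = T (fun i => compLp hP (enc i) (enc_inj' i) (x i)) := rfl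

theorem liftForm_norm {𝕂 : Type*} [RCLike 𝕂] {P : ℝ≥0∞} [Fact (1 ≤ P)] (hP : 0 < P.toReal)
    {m : ℕ} (T : MultFormLp 𝕂 P m) :
    polyNorm (fun x => liftForm hP T (fun _ => x)) ≤ ‖T‖ := by
  refine csSup_le ⟨_, 0, by simp, rfl⟩ ?_
  rintro _ ⟨x, hx, rfl⟩
  have hx : ‖x‖ ≤ 1 := by simpa using hx
  simp only [liftForm_apply]
  refine (T.le_opNorm _).trans ?_
  refine mul_le_of_le_one_right (norm_nonneg _) ?_
  exact Finset.prod_le_one (fun i _ => norm_nonneg _) (fun i _ => (compLp_norm _ _ _ _).trans hx)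

theorem liftForm_coeff {𝕂 : Type*} [RCLike 𝕂] {P : ℝ≥0∞} [Fact (1 ≤ P)] (hP : 0 < P.toReal)
    {m : ℕ} (T : MultFormLp 𝕂 P m) (f : Fin m → ℕ) :
    coeffLp (liftForm hP T) (idx f) = T (fun i => lp.single P (f i) (1 : 𝕂)) := by
  unfold coeffLp
  let g : Fin m → (idx f).support := fun i => ⟨enc i (f i), (idx_mem _ _).2 ⟨i, rfl⟩⟩
  rw [Finset.sum_eq_single g]
  · rw [if_pos]
    · rw [liftForm_apply]
      simp only [g, compLp_single_eq]
    · intro j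
      rw [idx_apply]
      congr 1
      ext k
      simp [g, Subtype.ext_iff]
  · intro h _ hne
    split_ifs with hc
    · rw [liftForm_apply]
      have : ∃ i, h i ≠ g i := by
        by_contra! hh
        exact hne (funext hh)
      obtain ⟨i, hi⟩ := this
      refine T.map_coord_zero i ?_
      obtain ⟨k, hk⟩ := (idx_mem _ _).1 (h i).2
      rw [← hk]
      apply compLp_single_ne
      rintro rfl
      exact hi (Subtype.ext hk.symm)
    · rfl
  · simp

/-- If the `m`-homogeneous polynomial Hardy–Littlewood inequality on `ℓ_p` (with `p ≥ 2m` and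
exponent `ρ = 2mp/(mp + p − 2m)`) holds with constant `C`, then the `m`-linear
Hardy–Littlewood inequality holds with the same constant `C`; that is, the multilinear
Hardy–Littlewood constant is at most the polynomial one. -/
theorem multilinear_HL_le_polynomial_HL (𝕂 : Type*) [RCLike 𝕂] (m : ℕ) (hm : 1 ≤ m)
    (p : ℝ) (hp : 2 * (m : ℝ) ≤ p) [Fact (1 ≤ ENNReal.ofReal p)]
    (C : ℝ) (hC : 0 ≤ C)
    (hpoly : ∀ T : MultFormLp 𝕂 (ENNReal.ofReal p) m, ∀ A : Finset {α : ℕ →₀ ℕ // mdeg α = m},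
      (∑ α ∈ A, ‖coeffLp T α.1‖ ^ (2 * (m : ℝ) * p / ((m : ℝ) * p + p - 2 * (m : ℝ))))
          ^ (((m : ℝ) * p + p - 2 * (m : ℝ)) / (2 * (m : ℝ) * p))
        ≤ C * polyNorm (fun x => T (fun _ => x))) :
    ∀ T : MultFormLp 𝕂 (ENNReal.ofReal p) m, ∀ A : Finset (Fin m → ℕ),
      (∑ f ∈ A, ‖T (fun i => lp.single (ENNReal.ofReal p) (f i) (1 : 𝕂))‖
            ^ (2 * (m : ℝ) * p / ((m : ℝ) * p + p - 2 * (m : ℝ))))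
          ^ (((m : ℝ) * p + p - 2 * (m : ℝ)) / (2 * (m : ℝ) * p))
        ≤ C * ‖T‖ := by
  intro T A
  have hP : 0 < (ENNReal.ofReal p).toReal := by
    have : (1 : ℝ) ≤ m := by exact_mod_cast hm
    rw [ENNReal.toReal_ofReal] <;> linarith
  have key := hpoly (liftForm hP T)
    (A.map ⟨fun f => ⟨idx f, idx_deg f⟩, fun f g h => idx_inj (Subtype.ext_iff.1 h)⟩)
  rw [Finset.sum_map] at key
  have e : ∀ f : Fin m → ℕ, ‖T (fun i => lp.single (ENNReal.ofReal p) (f i) (1 : 𝕂))‖ =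
      ‖coeffLp (liftForm hP T) (idx f)‖ := fun f => by rw [liftForm_coeff]
  simp only [e]
  exact key.trans (mul_le_mul_of_nonneg_left (liftForm_norm hP T) hC)
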